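/- Let A be a finitely generated commutative domain (finitely generated as a ring, i.e. as a ℤ-algebra) whose underlying additive group has no torsion. Then the group Aut(A) of ring automorphisms of A is virtually torsion free. -/

import Mathlib

/-!
Call `h` congruent to the identity modulo `m ^ 2`, for an ideal `m`, if `h a - a ∈ m ^ 2` for all `a`.
Two facts carry the proof.

* If `A / m` is finite, the automorphisms congruent to the identity modulo `m ^ 2` are the stabilizer
  of the quotient map under the action of `Aut(A)` on the *finite* set of ring homomorphisms
  `A → A / m ^ 2`, so they form a subgroup of finite index
  (`exists_congruence_subgroup`).
* If moreover a prime `p` lies in `m ≠ A` and `h ^ l = 1` with `l` coprime to `p`, then `h = 1`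
  (`eq_one_of_congruent`): the difference `D = h - 1` maps `m ^ n` into `m ^ (n + 1)`, so that
  `D(A) ⊆ m ^ n` implies `h ^ l = 1 + l D` modulo `m ^ (n + 1)`, hence `D(A) ⊆ m ^ (n + 1)`; by
  Krull's intersection theorem `D = 0`.

A residue field of `A` is finite, of characteristic `p` say, and so is one of `A[1/p]`, whose
characteristic `q` differs from `p`; the preimage in `A` of a maximal ideal of `A[1/p]` has a finite
quotient ring, of characteristic `q`. The intersection of the two congruence subgroups so obtained contains no element of prime order `l`, since `l` cannot
equal both `p` and `q`.
-/

/-- `h - 1` raises the `m`-adic filtration by one. -/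
lemma sub_mem_pow_succ {A : Type*} [CommRing A] {m : Ideal A} {h : A ≃+* A}
    (hD : ∀ a, h a - a ∈ m ^ 2) (n : ℕ) : ∀ a ∈ m ^ n, h a - a ∈ m ^ (n + 1) := by
  have hm : ∀ a ∈ m, h a ∈ m := fun a ha => by
    have := m.add_mem (Ideal.pow_le_self two_ne_zero (hD a)) ha
    simpa using this
  induction n with
  | zero => exact fun a _ => Ideal.pow_le_pow_right (by norm_num) (hD a)
  | succ n ih =>
    intro a ha
    rw [pow_succ] at ha
    refine Submodule.mul_induction_on ha (fun x hx y hy => ?_) (fun x y hx hy => ?_)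
    · have e : h (x * y) - x * y = (h x - x) * h y + x * (h y - y) := by
        rw [map_mul]; ring
      rw [e]
      refine Ideal.add_mem _ ?_ ?_
      · rw [pow_succ]
        exact Ideal.mul_mem_mul (ih x hx) (hm y hy)
      · rw [show n + 1 + 1 = n + 2 from rfl, pow_add]
        exact Ideal.mul_mem_mul hx (hD y)
    · have e : h (x + y) - (x + y) = (h x - x) + (h y - y) := by
        rw [map_add]; ring
      rw [e]
      exact Ideal.add_mem _ hx hy

/-- An automorphism congruent to the identity modulo `m ^ 2`, of finite order prime to the residue
characteristic, is trivial. -/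
lemma eq_one_of_congruent {A : Type*} [CommRing A] [IsDomain A] [IsNoetherianRing A]
    {m : Ideal A} (hm : m ≠ ⊤) {p : ℕ} (hp : (p : A) ∈ m) {h : A ≃+* A}
    (hD : ∀ a, h a - a ∈ m ^ 2) {l : ℕ} (hl : h ^ l = 1) (hlp : Nat.Coprime l p) : h = 1 := by
  have key : ∀ n : ℕ, ∀ a, h a - a ∈ m ^ n := by
    intro n
    induction n with
    | zero => simp
    | succ n ih =>
      intro a
      have hk : ∀ k : ℕ, (h ^ k) a - a - k * (h a - a) ∈ m ^ (n + 1) := by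
        intro k
        induction k with
        | zero => simp
        | succ k ihk =>
          -- Up to `m ^ (n + 1)`, applying `h` to `D a` changes nothing.
          have h1 := sub_mem_pow_succ hD n _ (ih a)
          have h2 : h ((h ^ k) a - a - k * (h a - a)) ∈ m ^ (n + 1) := by
            have := Ideal.add_mem _
              (Ideal.pow_le_pow_right (Nat.le_succ _) (sub_mem_pow_succ hD (n + 1) _ ihk)) ihk
            simpa using this
          have e : (h ^ (k + 1)) a - a - ((k + 1 : ℕ) : A) * (h a - a)
              = h ((h ^ k) a - a - k * (h a - a)) + k * (h (h a - a) - (h a - a)) := by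
            rw [pow_succ', RingAut.mul_apply]
            push_cast [map_sub, map_mul, map_natCast]
            ring
          rw [e]
          exact Ideal.add_mem _ h2 (Ideal.mul_mem_left _ _ h1)
      have hla : (l : A) * (h a - a) ∈ m ^ (n + 1) := by
        have := hk l
        rw [hl] at this
        simpa using this
      have hcop : IsCoprime (l : A) ((p : A) ^ (n + 1)) := (hlp.cast (R := A)).pow_right
      obtain ⟨u, v, huv⟩ := hcop
      have e : h a - a = u * (l * (h a - a)) + (v * (h a - a)) * (p : A) ^ (n + 1) := by
        linear_combination (-(h a - a)) * huv
      rw [e]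
      exact Ideal.add_mem _ (Ideal.mul_mem_left _ _ hla)
        (Ideal.mul_mem_left _ _ (Ideal.pow_mem_pow hp _))
  ext a
  have hmem : h a - a ∈ ⨅ i : ℕ, m ^ i := by simpa [Submodule.mem_iInf] using fun i => key i a
  rw [Ideal.iInf_pow_eq_bot_of_isDomain m hm, Ideal.mem_bot, sub_eq_zero] at hmem
  exact hmem

lemma finite_ringHom {A R : Type*} [CommRing A] [CommRing R] [Finite R]
    (hfg : Algebra.FiniteType ℤ A) : Finite (A →+* R) := by
  obtain ⟨s, hs⟩ := hfg.out
  refine Finite.of_injective (fun (φ : A →+* R) (x : s) => φ x) fun φ ψ e => ?_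
  have := AlgHom.ext_of_adjoin_eq_top (φ₁ := φ.toIntAlgHom) (φ₂ := ψ.toIntAlgHom) hs
    fun x hx => congrFun e ⟨x, hx⟩
  ext a
  exact DFunLike.congr_fun this a

lemma exists_congruence_subgroup {A : Type*} [CommRing A]
    (hfg : Algebra.FiniteType ℤ A) (I : Ideal A) [Finite (A ⧸ I)] :
    ∃ H : Subgroup (A ≃+* A), H.index ≠ 0 ∧ ∀ h ∈ H, ∀ a, h a - a ∈ I := by
  have := finite_ringHom (R := A ⧸ I) hfg
  let _ : MulAction (A ≃+* A) (A →+* A ⧸ I) :=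
    { smul := fun g φ => φ.comp (g⁻¹ : A ≃+* A).toRingHom
      one_smul := fun φ => by ext a; rfl
      mul_smul := fun g g' φ => by
        ext a
        change φ ((g * g')⁻¹ a) = φ (g'⁻¹ (g⁻¹ a))
        rw [mul_inv_rev]; rfl }
  refine ⟨MulAction.stabilizer _ (Ideal.Quotient.mk I), ?_, fun h hh a => ?_⟩
  · rw [MulAction.index_stabilizer]
    exact (Set.ncard_pos (Set.toFinite _)).2 (MulAction.nonempty_orbit _) |>.ne'
  · have h1 : (h⁻¹ • Ideal.Quotient.mk I : A →+* A ⧸ I) = Ideal.Quotient.mk I :=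
      MulAction.mem_stabilizer_iff.1 (Subgroup.inv_mem _ hh)
    have h2 := DFunLike.congr_fun h1 a
    change Ideal.Quotient.mk I ((h⁻¹)⁻¹ a) = _ at h2
    rw [inv_inv] at h2
    exact Ideal.Quotient.eq.1 h2

lemma isJacobsonRing_int : IsJacobsonRing ℤ := by
  refine isJacobsonRing_iff_prime_eq.2 fun P hP => ?_
  rcases eq_or_ne P ⊥ with rfl | hP0
  · refine le_antisymm (fun x hx => ?_) Ideal.le_jacobson
    rw [Ideal.mem_bot]
    -- `x ^ 2 + 1` is a unit of `ℤ`.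
    rcases Int.isUnit_iff.1 (Ideal.mem_jacobson_bot.1 hx x) with h | h <;> nlinarith
  · have := hP.isMaximal hP0
    exact Ideal.jacobson_eq_self_of_isMaximal

/-- Weak Nullstellensatz over `ℤ`: a nonzero finitely generated ring has a finite residue field. -/
lemma exists_finite_residue (B : Type*) [CommRing B] [Nontrivial B] [Algebra.FiniteType ℤ B] :
    ∃ (p : ℕ) (m : Ideal B), p.Prime ∧ m.IsMaximal ∧ (p : B) ∈ m ∧ Finite (B ⧸ m) := by
  obtain ⟨m, hm⟩ := Ideal.exists_maximal B
  let _ : Field (B ⧸ m) := Ideal.Quotient.field m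
  have := isJacobsonRing_int
  have hfin : Module.Finite ℤ (B ⧸ m) := finite_of_finite_type_of_isJacobsonRing ℤ (B ⧸ m)
  obtain ⟨p, hp⟩ := CharP.exists (B ⧸ m)
  have hp0 : p ≠ 0 := by
    rintro rfl
    have : CharZero (B ⧸ m) := CharP.charP_to_charZero _
    -- A field integral over the subring `ℤ` would make `ℤ` a field.
    exact Int.not_isField (isField_of_isIntegral_of_isField
      (FaithfulSMul.algebraMap_injective ℤ (B ⧸ m)) (Field.toIsField (B ⧸ m)))
  refine ⟨p, m, (CharP.char_is_prime_or_zero (B ⧸ m) p).resolve_right hp0, hm, ?_, ?_⟩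
  · rw [← Ideal.Quotient.eq_zero_iff_mem]
    simp
  · refine Module.finite_of_fg_torsion _ fun x => ?_
    refine ⟨⟨(p : ℤ), mem_nonZeroDivisors_of_ne_zero (by exact_mod_cast hp0)⟩, ?_⟩
    change (p : ℤ) • x = 0
    simp

/-- A finitely generated domain of characteristic zero has finite residue rings of two different
prime characteristics. The second comes from a residue field of `A[1/p]`. -/
lemma exists_two_residues (A : Type*) [CommRing A] [IsDomain A] [CharZero A]
    [Algebra.FiniteType ℤ A] :
    ∃ (p q : ℕ) (m n : Ideal A), p.Prime ∧ q.Prime ∧ p ≠ q ∧ m ≠ ⊤ ∧ n ≠ ⊤ ∧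
      (p : A) ∈ m ∧ (q : A) ∈ n ∧ Finite (A ⧸ m) ∧ Finite (A ⧸ n) := by
  obtain ⟨p, m, hp, hm, hpm, hmf⟩ := exists_finite_residue A
  have hpA : (p : A) ≠ 0 := Nat.cast_ne_zero.2 hp.ne_zero
  -- Forgetting the construction leaves only the canonical `ℤ`-algebra structure on `B = A[1/p]`.
  obtain ⟨B, _, _, _⟩ : ∃ (B : Type _) (_ : CommRing B) (_ : Algebra A B),
      IsLocalization.Away (p : A) B :=
    ⟨Localization.Away (p : A), inferInstance, inferInstance, inferInstance⟩
  have : IsDomain B := IsLocalization.isDomain_of_le_nonZeroDivisors B (M := Submonoid.powers (p : A))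
    (powers_le_nonZeroDivisors_of_noZeroDivisors hpA)
  have : Algebra.FiniteType A B := IsLocalization.finiteType_of_monoid_fg (Submonoid.powers (p : A)) B
  have : Algebra.FiniteType ℤ B := Algebra.FiniteType.trans (S := A) ‹_› ‹_›
  obtain ⟨q, n, hq, hn, hqn, hnf⟩ := exists_finite_residue B
  refine ⟨p, q, m, n.comap (algebraMap A B), hp, hq, ?_, hm.ne_top, ?_, hpm, ?_, hmf, ?_⟩
  · rintro rfl
    have hu := IsLocalization.Away.algebraMap_isUnit (S := B) (p : A)
    rw [map_natCast] at hu
    exact hn.ne_top (Ideal.eq_top_of_isUnit_mem _ hqn hu)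
  · exact Ideal.comap_ne_top _ hn.ne_top
  · simpa [Ideal.mem_comap] using hqn
  · exact Finite.of_injective _ (Ideal.quotientMap_injective (I := n) (f := algebraMap A B))

/-- Lemma 1: Let `A` be a finitely generated commutative domain without additive
torsion.  Then the group `Aut(A)` of ring automorphisms is virtually torsion free. -/
theorem stmt_7 (A : Type*) [CommRing A] [IsDomain A] (hfg : Algebra.FiniteType ℤ A)
    (htf : ∀ (a : A) (n : ℕ), 1 ≤ n → n • a = 0 → a = 0) :
    ∃ H : Subgroup (A ≃+* A), H.index ≠ 0 ∧ ∀ h ∈ H, IsOfFinOrder h → h = 1 := by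
  have : CharZero A := charZero_of_inj_zero fun n hn => by
    by_contra h0
    exact one_ne_zero (htf 1 n (Nat.one_le_iff_ne_zero.2 h0) (by simpa using hn))
  have : IsNoetherianRing A := Algebra.FiniteType.isNoetherianRing ℤ A
  obtain ⟨p, q, m, n, hp, hq, hpq, hm, hn, hpm, hqn, hmf, hnf⟩ := exists_two_residues A
  have : Finite (A ⧸ m ^ 2) := Ideal.finite_quotient_pow (IsNoetherian.noetherian m) 2
  have : Finite (A ⧸ n ^ 2) := Ideal.finite_quotient_pow (IsNoetherian.noetherian n) 2
  obtain ⟨H, hH, hHm⟩ := exists_congruence_subgroup hfg (m ^ 2)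
  obtain ⟨K, hK, hKn⟩ := exists_congruence_subgroup hfg (n ^ 2)
  refine ⟨H ⊓ K, Subgroup.index_inf_ne_zero hH hK, fun h hh hfo => ?_⟩
  by_contra h1
  -- Replace `h` by a power `g` of prime order `l`.
  obtain ⟨l, hl, hdvd⟩ := Nat.exists_prime_and_dvd (mt orderOf_eq_one_iff.1 h1)
  have hg : orderOf (h ^ (orderOf h / l)) = l := orderOf_pow_orderOf_div hfo.orderOf_pos.ne' hdvd
  set g := h ^ (orderOf h / l)
  have hgHK : g ∈ H ⊓ K := Subgroup.pow_mem _ hh _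
  have hgl : g ^ l = 1 := by rw [← hg]; exact pow_orderOf_eq_one g
  have hg1 : g = 1 := by
    by_cases hlp : l = p
    · exact eq_one_of_congruent hn hqn (hKn g hgHK.2) hgl
        ((Nat.coprime_primes hl hq).2 (hlp ▸ hpq))
    · exact eq_one_of_congruent hm hpm (hHm g hgHK.1) hgl ((Nat.coprime_primes hl hp).2 hlp)
  rw [hg1, orderOf_one] at hg
  exact hl.one_lt.ne hg
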